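/- Local maximum principle with L^p norms, non-divergence form: For every p > 0 there exists C(p) > 0, depending only on p, n, λ, Λ, such that the following holds. Let A be uniformly elliptic on the unit ball B_1 ⊂ ℝ^n and let φ ∈ C²(B_1) satisfy tr(A(x) D²φ(x)) ≥ 0 for all x ∈ B_1. Then sup_{B_{1/2}} φ⁺ ≤ C(p) (∫_{B_1} (φ⁺)^p dx)^{1/p}, where φ⁺ = max(φ, 0). -/

import Mathlib

open MeasureTheory Metric Filter

noncomputable section

/-- `ℝ^n` with the Euclidean norm. -/
abbrev Eucl (n : ℕ) : Type := EuclideanSpace ℝ (Fin n)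

/-- Uniform ellipticity of the coefficient matrix `A` on `Ω`:
`λ|ξ|² ≤ ξ·(A(x)ξ)` and `|A(x)ξ| ≤ Λ|ξ|`. -/
def UnifElliptic {n : ℕ} (lam Lam : ℝ) (Ω : Set (Eucl n))
    (A : Eucl n → Matrix (Fin n) (Fin n) ℝ) : Prop :=
  ∀ x ∈ Ω, ∀ ξ : Eucl n,
    lam * ‖ξ‖ ^ 2 ≤ ∑ i, ξ i * ∑ j, A x i j * ξ j ∧
    Real.sqrt (∑ i, (∑ j, A x i j * ξ j) ^ 2) ≤ Lam * ‖ξ‖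

/-- `u` is a `C²` subsolution: `tr(A D²u) ≥ 0` on the open set `Ω`. -/
def NondivSubsolution {n : ℕ} (A : Eucl n → Matrix (Fin n) (Fin n) ℝ) (Ω : Set (Eucl n))
    (u : Eucl n → ℝ) : Prop :=
  ContDiffOn ℝ 2 u Ω ∧ ∀ x ∈ Ω,
    0 ≤ ∑ i, ∑ j, A x i j *
      fderiv ℝ (fun y => fderiv ℝ u y (EuclideanSpace.single i 1)) x
        (EuclideanSpace.single j 1)

/-!
The argument is that of Alexandrov, Bakelman and Pucci, with a cutoff to absorb the supremum. Let
`η = ρ² - |x - c|²` and `v = η^(m+2) φ`, with maximum `M > 0` over the ball of radius `ρ`. Every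
slope of size less than `M / 2ρ` is the gradient of `v` at a contact point, where the tangent plane
of `v` lies above its graph, so the volume of `B_{M/2ρ}` is at most the integral of `|det D²v|` over
the contact set. There `D²v ≤ 0`, and `|∇v| ≤ v / dist(x, ∂B)` because `v` vanishes on the sphere;
as powers of `η` absorb the derivatives falling on the cutoff, the equation bounds `-tr(A D²v)`, and
with it the eigenvalues of `-D²v`, by a multiple of `η^m φ`. By interpolation
`(η^m φ)^n ≤ M^(n-q) (φ⁺)^q` with `q = 2n / (m+2)`, which leaves `M^q ≤ C ∫ (φ⁺)^q`. Taking `m` so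
large that `q ≤ p`, Hölder's inequality finishes the proof.
-/

section LinearAlgebra

open LinearMap

variable {E : Type*} [NormedAddCommGroup E] [InnerProductSpace ℝ E]

/-- Ellipticity of a single coefficient operator, with the constants of `UnifElliptic`; unlike
matrices, operators make sense without choosing coordinates. -/
structure IsElliptic (lam Lam : ℝ) (A : E →L[ℝ] E) : Prop where
  coercive : ∀ ξ, lam * ‖ξ‖ ^ 2 ≤ inner ℝ ξ (A ξ)
  norm_apply_le : ∀ ξ, ‖A ξ‖ ≤ Lam * ‖ξ‖

variable {lam Lam : ℝ} {A T : E →L[ℝ] E}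

lemma IsElliptic.nonneg [Nontrivial E] (hA : IsElliptic lam Lam A) : 0 ≤ Lam := by
  obtain ⟨ξ, hξ⟩ := exists_ne (0 : E)
  exact nonneg_of_mul_nonneg_left ((norm_nonneg _).trans (hA.norm_apply_le ξ)) (norm_pos_iff.2 hξ)

lemma IsElliptic.inner_apply_le (hA : IsElliptic lam Lam A) (a b : E) :
    inner ℝ a (A b) ≤ Lam * ‖a‖ * ‖b‖ :=
  calc inner ℝ a (A b) ≤ ‖a‖ * ‖A b‖ := real_inner_le_norm a (A b)
    _ ≤ ‖a‖ * (Lam * ‖b‖) := by gcongr; exact hA.norm_apply_le b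
    _ = Lam * ‖a‖ * ‖b‖ := by ring

variable [FiniteDimensional ℝ E]

lemma IsElliptic.trace_le (hA : IsElliptic lam Lam A) :
    trace ℝ E A ≤ Module.finrank ℝ E * Lam := by
  let b := stdOrthonormalBasis ℝ E
  rw [trace_eq_sum_inner _ b]
  calc ∑ i, inner ℝ (b i) (A (b i)) ≤ ∑ _i : Fin (Module.finrank ℝ E), Lam :=
        Finset.sum_le_sum fun i _ ↦ by simpa using hA.inner_apply_le (b i) (b i)
    _ = Module.finrank ℝ E * Lam := by simp

lemma trace_comp_rankOne (A : E →L[ℝ] E) (a b : E) :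
    trace ℝ E (A ∘L InnerProductSpace.rankOne ℝ a b) = inner ℝ b (A a) := by
  rw [InnerProductSpace.comp_rankOne, InnerProductSpace.trace_rankOne]

lemma mul_trace_le_trace_comp (hA : ∀ ξ, lam * ‖ξ‖ ^ 2 ≤ inner ℝ ξ (A ξ)) (hT : T.IsPositive) :
    lam * trace ℝ E T ≤ trace ℝ E (A ∘L T) := by
  have hT' := (ContinuousLinearMap.isPositive_toLinearMap_iff T).2 hT
  let b := hT'.isSymmetric.eigenvectorBasis rfl
  let μ := hT'.isSymmetric.eigenvalues rfl
  have htrace : trace ℝ E T = ∑ i, μ i := hT'.isSymmetric.trace_eq_sum_eigenvalues rfl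
  rw [htrace, trace_eq_sum_inner _ b, Finset.mul_sum]
  refine Finset.sum_le_sum fun i _ ↦ ?_
  have happly : T (b i) = μ i • b i := hT'.isSymmetric.apply_eigenvectorBasis rfl i
  calc lam * μ i = μ i * (lam * ‖b i‖ ^ 2) := by rw [b.norm_eq_one]; ring
    _ ≤ μ i * inner ℝ (b i) (A (b i)) :=
        mul_le_mul_of_nonneg_left (hA (b i)) (hT'.nonneg_eigenvalues rfl i)
    _ = inner ℝ (b i) (A (T (b i))) := by rw [happly, map_smul, real_inner_smul_right]

lemma abs_det_le_trace_pow_finrank {T : E →ₗ[ℝ] E} (hT : T.IsPositive) :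
    |LinearMap.det T| ≤ trace ℝ E T ^ Module.finrank ℝ E := by
  let μ := hT.isSymmetric.eigenvalues rfl
  have hμ : ∀ i, 0 ≤ μ i := hT.nonneg_eigenvalues rfl
  have htrace : trace ℝ E T = ∑ i, μ i := hT.isSymmetric.trace_eq_sum_eigenvalues rfl
  have hdet : LinearMap.det T = ∏ i, μ i := hT.isSymmetric.det_eq_prod_eigenvalues rfl
  calc |LinearMap.det T| = ∏ i, μ i := by
        rw [hdet, abs_of_nonneg (Finset.prod_nonneg fun i _ ↦ hμ i)]
    _ ≤ ∏ _i : Fin (Module.finrank ℝ E), trace ℝ E T :=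
        Finset.prod_le_prod (fun i _ ↦ hμ i) fun i _ ↦
          htrace ▸ Finset.single_le_sum (fun j _ ↦ hμ j) (Finset.mem_univ i)
    _ = trace ℝ E T ^ Module.finrank ℝ E := by simp

lemma abs_det_le_of_trace_comp_le {K : ℝ} (hlam : 0 < lam)
    (hA : ∀ ξ, lam * ‖ξ‖ ^ 2 ≤ inner ℝ ξ (A ξ)) (hT : (-T).IsPositive)
    (hK : -trace ℝ E (A ∘L T) ≤ lam * K) : |T.det| ≤ K ^ Module.finrank ℝ E := by
  have hT' := (ContinuousLinearMap.isPositive_toLinearMap_iff (-T)).2 hT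
  have htrace : trace ℝ E (-T : E →L[ℝ] E) ≤ K := by
    refine le_of_mul_le_mul_left ((mul_trace_le_trace_comp hA hT).trans ?_) hlam
    simpa using hK
  have hdet : |T.det| = |LinearMap.det (-T : E →L[ℝ] E).toLinearMap| := by
    rw [ContinuousLinearMap.toLinearMap_neg, ← neg_one_smul ℝ T.toLinearMap, LinearMap.det_smul]
    simp [abs_mul, ContinuousLinearMap.det]
  calc |T.det| ≤ trace ℝ E (-T : E →L[ℝ] E) ^ Module.finrank ℝ E :=
        hdet ▸ abs_det_le_trace_pow_finrank hT'
    _ ≤ K ^ Module.finrank ℝ E := pow_le_pow_left₀ hT'.trace_nonneg htrace _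

end LinearAlgebra

section Calculus

open scoped Gradient Topology

lemma deriv_deriv_nonpos_of_isLocalMax {g : ℝ → ℝ} {t : ℝ} (hg : ContinuousAt g t)
    (hmax : IsLocalMax g t) : deriv (deriv g) t ≤ 0 := by
  by_contra! hpos
  have hmin : IsLocalMin g t := isLocalMin_of_deriv_deriv_pos hpos hmax.deriv_eq_zero hg
  have hconst : g =ᶠ[𝓝 t] fun _ ↦ g t := by
    filter_upwards [hmin, hmax] with s h₁ h₂ using le_antisymm h₂ h₁
  have : deriv (deriv g) t = 0 := by simp [hconst.deriv.deriv_eq]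
  exact hpos.ne' this

section NormedSpace

variable {V : Type*} [NormedAddCommGroup V] [NormedSpace ℝ V] {u : V → ℝ} {x : V}

lemma deriv_deriv_comp_add_smul (hu : ContDiffAt ℝ 2 u x) (ξ : V) :
    deriv (deriv fun t : ℝ ↦ u (x + t • ξ)) 0 = fderiv ℝ (fderiv ℝ u) x ξ ξ := by
  have hline (t : ℝ) : HasDerivAt (fun t : ℝ ↦ x + t • ξ) ξ t := by
    simpa only [id_eq, one_smul] using ((hasDerivAt_id t).smul_const ξ).const_add x
  have htendsto : Tendsto (fun t : ℝ ↦ x + t • ξ) (𝓝 0) (𝓝 x) :=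
    Continuous.tendsto' (by fun_prop) _ _ (by simp)
  have hderiv : deriv (fun t : ℝ ↦ u (x + t • ξ)) =ᶠ[𝓝 0] fun t ↦ fderiv ℝ u (x + t • ξ) ξ := by
    filter_upwards [htendsto.eventually (hu.eventually (by simp))] with t ht
    exact ((ht.differentiableAt (by simp)).hasFDerivAt.comp_hasDerivAt t (hline t)).deriv
  have hfderiv : HasFDerivAt (fderiv ℝ u) (fderiv ℝ (fderiv ℝ u) x) (x + (0 : ℝ) • ξ) := by
    rw [zero_smul, add_zero]
    exact ((hu.fderiv_right (m := 1) (by norm_num)).differentiableAt one_ne_zero).hasFDerivAt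
  have hsecond : HasDerivAt (fun t : ℝ ↦ fderiv ℝ u (x + t • ξ)) (fderiv ℝ (fderiv ℝ u) x ξ) 0 :=
    hfderiv.comp_hasDerivAt 0 (hline 0)
  rw [hderiv.deriv_eq, (hsecond.clm_apply (hasDerivAt_const (0 : ℝ) ξ)).deriv]
  simp only [map_zero, add_zero]

lemma fderiv_fderiv_apply_nonpos_of_isLocalMax (hu : ContDiffAt ℝ 2 u x) (hmax : IsLocalMax u x)
    (ξ : V) : fderiv ℝ (fderiv ℝ u) x ξ ξ ≤ 0 := by
  rw [← deriv_deriv_comp_add_smul hu]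
  have hline : Tendsto (fun t : ℝ ↦ x + t • ξ) (𝓝 0) (𝓝 x) :=
    Continuous.tendsto' (by fun_prop) _ _ (by simp)
  refine deriv_deriv_nonpos_of_isLocalMax ?_ ?_
  · exact ContinuousAt.comp (by simpa using hu.continuousAt) (by fun_prop)
  · filter_upwards [hline.eventually hmax] with t ht
    simpa using ht

end NormedSpace

variable {E : Type*} [NormedAddCommGroup E] [InnerProductSpace ℝ E] [CompleteSpace E]
  {u : E → ℝ} {x : E}

/-- The Hessian `D²u(x)`, encoded as the operator `ξ ↦ D(∇u)(x) ξ`. -/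
def hessian (u : E → ℝ) (x : E) : E →L[ℝ] E := fderiv ℝ (∇ u) x

lemma contDiffAt_gradient (hu : ContDiffAt ℝ 2 u x) : ContDiffAt ℝ 1 (∇ u) x :=
  (InnerProductSpace.toDual ℝ E).symm.contDiff.contDiffAt.comp x
    (hu.fderiv_right (m := 1) (by norm_num))

lemma hasFDerivAt_gradient (hu : ContDiffAt ℝ 2 u x) : HasFDerivAt (∇ u) (hessian u x) x :=
  ((contDiffAt_gradient hu).differentiableAt one_ne_zero).hasFDerivAt

lemma inner_hessian_apply (hu : ContDiffAt ℝ 2 u x) (a b : E) :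
    inner ℝ (hessian u x a) b = fderiv ℝ (fderiv ℝ u) x a b := by
  have hdual : fderiv ℝ u = InnerProductSpace.toDual ℝ E ∘ ∇ u := toDual_comp_gradient.symm
  have hcomp := (InnerProductSpace.toDual ℝ E).toContinuousLinearEquiv.hasFDerivAt.comp x
    (hasFDerivAt_gradient hu)
  rw [hdual]
  exact (DFunLike.congr_fun (DFunLike.congr_fun hcomp.fderiv a) b).symm

lemma hessian_isSymmetric (hu : ContDiffAt ℝ 2 u x) : (hessian u x).IsSymmetric := by
  intro a b
  rw [ContinuousLinearMap.coe_coe, inner_hessian_apply hu, real_inner_comm,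
    inner_hessian_apply hu, (hu.isSymmSndFDerivAt (by simp)).eq]

lemma gradient_eq_of_isLocalMax_sub_inner {p : E} (hu : DifferentiableAt ℝ u x)
    (hmax : IsLocalMax (fun y ↦ u y - inner ℝ p y) x) : ∇ u x = p := by
  have hderiv : HasFDerivAt (fun y ↦ u y - inner ℝ p y) (fderiv ℝ u x - innerSL ℝ p) x :=
    hu.hasFDerivAt.sub (innerSL ℝ p).hasFDerivAt
  refine ext_inner_right ℝ fun y ↦ ?_
  rw [inner_gradient_left, sub_eq_zero.1 (hmax.hasFDerivAt_eq_zero hderiv), innerSL_apply_apply]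

lemma neg_hessian_isPositive_of_isLocalMax_sub_inner {p : E} (hu : ContDiffAt ℝ 2 u x)
    (hmax : IsLocalMax (fun y ↦ u y - inner ℝ p y) x) : (-hessian u x).IsPositive := by
  have hfderiv : fderiv ℝ (fun y ↦ u y - inner ℝ p y) =ᶠ[𝓝 x]
      fun y ↦ fderiv ℝ u y - innerSL ℝ p := by
    filter_upwards [hu.eventually (by simp)] with y hy
    exact ((hy.differentiableAt (by simp)).hasFDerivAt.sub (innerSL ℝ p).hasFDerivAt).fderiv
  have hcont : ContDiffAt ℝ 2 (fun y ↦ u y - inner ℝ p y) x :=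
    hu.sub (innerSL ℝ p).contDiff.contDiffAt
  rw [ContinuousLinearMap.isPositive_iff]
  refine ⟨fun a b ↦ by simpa using hessian_isSymmetric hu a b, fun ξ ↦ ?_⟩
  have hnonpos := fderiv_fderiv_apply_nonpos_of_isLocalMax hcont hmax ξ
  rw [hfderiv.fderiv_eq, fderiv_sub_const] at hnonpos
  rw [_root_.neg_apply, inner_neg_left, inner_hessian_apply hu]
  linarith

end Calculus

section UpperContactSet

open scoped Gradient Topology

variable {E : Type*} [NormedAddCommGroup E] [InnerProductSpace ℝ E] {v : E → ℝ} {c x x₀ : E} {ρ : ℝ}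

section CompleteSpace

variable [CompleteSpace E]

/-- The upper contact set of `v` in the ball of radius `ρ` about `c`: the interior points where `v`
is positive and its tangent hyperplane lies above its graph over the closed ball. -/
def upperContactSet (v : E → ℝ) (c : E) (ρ : ℝ) : Set E :=
  {x ∈ ball c ρ | 0 < v x ∧ ∀ y ∈ closedBall c ρ, v y ≤ v x + inner ℝ (∇ v x) (y - x)}

lemma upperContactSet_subset_ball : upperContactSet v c ρ ⊆ ball c ρ := fun _ hx ↦ hx.1

lemma isLocalMax_sub_inner_gradient (hx : x ∈ upperContactSet v c ρ) :
    IsLocalMax (fun y ↦ v y - inner ℝ (∇ v x) y) x := by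
  filter_upwards [isOpen_ball.mem_nhds hx.1] with y hy
  have := hx.2.2 y (ball_subset_closedBall hy)
  rw [inner_sub_right] at this
  linarith

lemma norm_gradient_mul_le (hv : ∀ y ∈ sphere c ρ, 0 ≤ v y) (hx : x ∈ upperContactSet v c ρ) :
    ‖∇ v x‖ * (ρ - ‖x - c‖) ≤ v x := by
  have hρ : 0 < ρ := pos_of_mem_ball hx.1
  rcases eq_or_ne (∇ v x) 0 with h0 | h0
  · simpa [h0] using hx.2.1.le
  set g := ∇ v x
  -- The boundary point in the direction of steepest descent of the tangent hyperplane.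
  let y := c - (ρ / ‖g‖) • g
  have hy : y ∈ sphere c ρ := by
    simp [y, norm_smul, h0, hρ.le]
  have hinner : inner ℝ g (y - x) = -(ρ * ‖g‖) - inner ℝ g (x - c) := by
    have : y - x = -(ρ / ‖g‖) • g - (x - c) := by simp only [y]; module
    rw [this, inner_sub_right, real_inner_smul_right, real_inner_self_eq_norm_sq]
    field_simp
  have hcontact := hx.2.2 y (sphere_subset_closedBall hy)
  have hcs := neg_le_of_abs_le (abs_real_inner_le_norm g (x - c))
  linarith [hv y hy]

lemma measurableSet_upperContactSet [MeasurableSpace E] [BorelSpace E]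
    (hv : ContDiffOn ℝ 1 v (ball c ρ)) : MeasurableSet (upperContactSet v c ρ) := by
  have hcont : ContinuousOn v (ball c ρ) := hv.continuousOn
  have hgrad : ContinuousOn (∇ v) (ball c ρ) :=
    (InnerProductSpace.toDual ℝ E).symm.continuous.comp_continuousOn
      (hv.continuousOn_fderiv_of_isOpen isOpen_ball le_rfl)
  let gap (y x : E) : ℝ := v x + inner ℝ (∇ v x) (y - x) - v y
  have hgap (y : E) : ContinuousOn (gap y) (ball c ρ) := by fun_prop
  have heq : upperContactSet v c ρ = (ball c ρ ∩ v ⁻¹' Set.Ioi 0) \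
      ⋃ y ∈ closedBall c ρ, ball c ρ ∩ gap y ⁻¹' Set.Iio 0 := by
    ext x
    simp only [upperContactSet, gap, Set.mem_ofPred_eq, Set.mem_sdiff, Set.mem_inter_iff,
      Set.mem_preimage, Set.mem_Ioi, Set.mem_Iio, Set.mem_iUnion, sub_neg, not_exists, not_and,
      not_lt]
    tauto
  rw [heq]
  exact (hcont.isOpen_inter_preimage isOpen_ball isOpen_Ioi).measurableSet.diff
    (isOpen_biUnion fun y _ ↦ (hgap y).isOpen_inter_preimage isOpen_ball isOpen_Iio).measurableSet

end CompleteSpace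

variable [FiniteDimensional ℝ E]

lemma ball_subset_gradient_image_upperContactSet (hcont : ContinuousOn v (closedBall c ρ))
    (hdiff : DifferentiableOn ℝ v (ball c ρ)) (hsphere : ∀ y ∈ sphere c ρ, v y ≤ 0)
    (hx₀ : x₀ ∈ ball c ρ) :
    ball 0 (v x₀ / (2 * ρ)) ⊆ ∇ v '' upperContactSet v c ρ := by
  intro p hp
  have hρ : 0 < ρ := pos_of_mem_ball hx₀
  have hpρ : 2 * ρ * ‖p‖ < v x₀ := by
    rwa [mem_ball_zero_iff, lt_div_iff₀' (by positivity)] at hp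
  obtain ⟨x, hx, hmax⟩ := (isCompact_closedBall c ρ).exists_isMaxOn
    ⟨x₀, ball_subset_closedBall hx₀⟩ (hcont.sub (by fun_prop : ContinuousOn (inner ℝ p) _))
  have htangent (y : E) (hy : y ∈ closedBall c ρ) : v y ≤ v x + inner ℝ p (y - x) := by
    have : v y - inner ℝ p y ≤ v x - inner ℝ p x := hmax hy
    rw [inner_sub_right]
    linarith
  have hpos : 0 < v x := by
    have hdist : ‖x₀ - x‖ ≤ 2 * ρ :=
      calc ‖x₀ - x‖ = dist x₀ x := (dist_eq_norm _ _).symm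
        _ ≤ dist x₀ c + dist x c := dist_triangle_right _ _ _
        _ ≤ 2 * ρ := by linarith [mem_closedBall.1 hx, mem_ball.1 hx₀]
    have hinner : inner ℝ p (x₀ - x) ≤ 2 * ρ * ‖p‖ :=
      calc inner ℝ p (x₀ - x) ≤ ‖p‖ * ‖x₀ - x‖ := real_inner_le_norm _ _
        _ ≤ ‖p‖ * (2 * ρ) := by gcongr
        _ = 2 * ρ * ‖p‖ := by ring
    linarith [htangent x₀ (ball_subset_closedBall hx₀)]
  have hxball : x ∈ ball c ρ := by
    refine mem_ball.2 (lt_of_le_of_ne hx fun h ↦ ?_)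
    exact (hsphere x h).not_gt hpos
  have hgrad : ∇ v x = p := gradient_eq_of_isLocalMax_sub_inner
    (hdiff.differentiableAt (isOpen_ball.mem_nhds hxball))
    (hmax.isLocalMax (mem_of_superset (isOpen_ball.mem_nhds hxball) ball_subset_closedBall))
  exact ⟨x, ⟨hxball, hpos, by rwa [hgrad]⟩, hgrad⟩

lemma measure_ball_le_lintegral_abs_det_hessian [MeasurableSpace E] [BorelSpace E]
    (μ : Measure E) [μ.IsAddHaarMeasure]
    (hcont : ContinuousOn v (closedBall c ρ)) (hv : ContDiffOn ℝ 2 v (ball c ρ))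
    (hsphere : ∀ y ∈ sphere c ρ, v y ≤ 0) (hx₀ : x₀ ∈ ball c ρ) :
    μ (ball 0 (v x₀ / (2 * ρ))) ≤
      ∫⁻ x in upperContactSet v c ρ, ENNReal.ofReal |(hessian v x).det| ∂μ := by
  calc μ (ball 0 (v x₀ / (2 * ρ))) ≤ μ (∇ v '' upperContactSet v c ρ) :=
        measure_mono (ball_subset_gradient_image_upperContactSet hcont
          (hv.differentiableOn two_ne_zero) hsphere hx₀)
    _ ≤ ∫⁻ x in upperContactSet v c ρ, ENNReal.ofReal |(hessian v x).det| ∂μ :=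
        addHaar_image_le_lintegral_abs_det_fderiv μ
          (measurableSet_upperContactSet (hv.of_le one_le_two)) fun x hx ↦
            (hasFDerivAt_gradient
              (hv.contDiffAt (isOpen_ball.mem_nhds hx.1))).hasFDerivWithinAt

end UpperContactSet

section Localization

open scoped Gradient Topology
open InnerProductSpace (rankOne)

variable {E : Type*} [NormedAddCommGroup E]

/-- The quadratic weight `ρ² - |x - c|²`, positive exactly inside the ball of radius `ρ > 0` about
`c`; its powers are the cutoff functions of the localization. -/
def ballWeight (c : E) (ρ : ℝ) (x : E) : ℝ := ρ ^ 2 - ‖x - c‖ ^ 2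

/-- The function `u` cut off by the power `m` of the quadratic weight of a ball. -/
def localization (c : E) (ρ : ℝ) (m : ℕ) (u : E → ℝ) (x : E) : ℝ := ballWeight c ρ x ^ m * u x

variable {c x : E} {ρ : ℝ} {m : ℕ} {u : E → ℝ}

lemma ballWeight_eq_mul : ballWeight c ρ x = (ρ - ‖x - c‖) * (ρ + ‖x - c‖) := by
  rw [ballWeight]
  ring

lemma ballWeight_pos (hx : x ∈ ball c ρ) : 0 < ballWeight c ρ x := by
  have hlt : ‖x - c‖ < ρ := mem_ball_iff_norm.1 hx
  rw [ballWeight_eq_mul]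
  exact mul_pos (sub_pos.2 hlt) (add_pos_of_pos_of_nonneg (pos_of_mem_ball hx) (norm_nonneg _))

lemma ballWeight_le : ballWeight c ρ x ≤ ρ ^ 2 := sub_le_self _ (sq_nonneg _)

lemma localization_eq_zero_of_mem_sphere (hm : m ≠ 0) (hx : x ∈ sphere c ρ) :
    localization c ρ m u x = 0 := by
  rw [localization, ballWeight, mem_sphere_iff_norm.1 hx, sub_self, zero_pow hm, zero_mul]

lemma pos_of_localization_pos (hx : x ∈ ball c ρ) (hpos : 0 < localization c ρ m u x) : 0 < u x :=
  pos_of_mul_pos_right hpos (pow_nonneg (ballWeight_pos hx).le m)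

variable [InnerProductSpace ℝ E]

lemma contDiff_ballWeight {n : WithTop ℕ∞} : ContDiff ℝ n (ballWeight c ρ) :=
  contDiff_const.sub ((contDiff_id.sub contDiff_const).norm_sq ℝ)

lemma hasFDerivAt_ballWeight :
    HasFDerivAt (ballWeight c ρ) (-((2 : ℝ) • innerSL ℝ (x - c))) x := by
  have h := ((hasFDerivAt_id x).sub_const c).norm_sq.const_sub (ρ ^ 2)
  refine h.congr_fderiv ?_
  ext ξ
  simp [two_smul]

lemma contDiffAt_localization {n : WithTop ℕ∞} (hu : ContDiffAt ℝ n u x) :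
    ContDiffAt ℝ n (localization c ρ m u) x :=
  (contDiff_ballWeight.contDiffAt.pow m).mul hu

variable [CompleteSpace E]

lemma gradient_localization (hu : DifferentiableAt ℝ u x) :
    ∇ (localization c ρ (m + 1) u) x = ballWeight c ρ x ^ (m + 1) • ∇ u x -
      (2 * (m + 1) * ballWeight c ρ x ^ m * u x) • (x - c) := by
  have hderiv : HasFDerivAt (localization c ρ (m + 1) u) _ x :=
    (hasFDerivAt_ballWeight.pow (m + 1)).mul hu.hasFDerivAt
  refine ext_inner_right ℝ fun ξ ↦ ?_
  rw [inner_gradient_left, hderiv.fderiv]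
  simp only [add_tsub_cancel_right, nsmul_eq_mul, Nat.cast_add, Nat.cast_one, map_sub, smul_neg,
    add_apply, smul_apply, smul_eq_mul, neg_apply, sub_apply, coe_innerSL_apply, inner_sub_left,
    real_inner_smul_left, inner_gradient_left]
  ring

lemma hessian_localization (hu : ContDiffAt ℝ 2 u x) :
    hessian (localization c ρ (m + 2) u) x = ballWeight c ρ x ^ (m + 2) • hessian u x -
      (2 * (m + 2) * ballWeight c ρ x ^ (m + 1)) •
        (rankOne ℝ (∇ u x) (x - c) + rankOne ℝ (x - c) (∇ u x)) -
      (2 * (m + 2) * ballWeight c ρ x ^ (m + 1) * u x) • .id ℝ E +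
      (4 * (m + 2) * (m + 1) * ballWeight c ρ x ^ m * u x) • rankOne ℝ (x - c) (x - c) := by
  have hgrad : ∇ (localization c ρ (m + 2) u) =ᶠ[𝓝 x] fun y ↦ ballWeight c ρ y ^ (m + 2) • ∇ u y -
      (2 * (m + 2) * (ballWeight c ρ y ^ (m + 1) * u y)) • (y - c) := by
    filter_upwards [hu.eventually (by simp)] with y hy
    rw [gradient_localization (m := m + 1) (hy.differentiableAt two_ne_zero)]
    push_cast
    ring_nf
  have hu' : HasFDerivAt u (fderiv ℝ u x) x := (hu.differentiableAt two_ne_zero).hasFDerivAt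
  have hweight : HasFDerivAt (ballWeight c ρ) _ x := hasFDerivAt_ballWeight
  have hderiv : HasFDerivAt (fun y ↦ ballWeight c ρ y ^ (m + 2) • ∇ u y -
      (2 * (m + 2) * (ballWeight c ρ y ^ (m + 1) * u y)) • (y - c)) _ x :=
    ((hweight.pow (m + 2)).smul (hasFDerivAt_gradient hu)).sub
      ((((hweight.pow (m + 1)).mul hu').const_mul (2 * (m + 2 : ℝ))).smul
        ((hasFDerivAt_id x).sub_const c))
  rw [hessian, hgrad.fderiv_eq, hderiv.fderiv]
  ext ξ
  simp only [Nat.add_one_sub_one, nsmul_eq_mul, Nat.cast_add, Nat.cast_ofNat, map_sub, smul_neg,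
    Pi.mul_apply, add_tsub_cancel_right, Nat.cast_one, smul_add, sub_apply, add_apply, smul_apply,
    ContinuousLinearMap.smulRight_apply, neg_apply, coe_innerSL_apply, smul_eq_mul, neg_smul,
    ContinuousLinearMap.id_apply, InnerProductSpace.rankOne_apply, inner_gradient_left]
  module

end Localization

section ContactEstimate

open scoped Gradient Topology

variable {E : Type*} [NormedAddCommGroup E] [InnerProductSpace ℝ E] {u : E → ℝ} {c x : E}
  {ρ lam Lam : ℝ} {m : ℕ}

lemma ballWeight_mul_norm_gradient_le [CompleteSpace E] (hx : x ∈ ball c ρ)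
    (hu : DifferentiableAt ℝ u x) (hpos : 0 ≤ u x)
    (hgrad : ‖∇ (localization c ρ (m + 1) u) x‖ * (ρ - ‖x - c‖) ≤ localization c ρ (m + 1) u x) :
    ballWeight c ρ x * ‖∇ u x‖ ≤ 2 * (m + 2) * ρ * u x := by
  have hη : 0 < ballWeight c ρ x := ballWeight_pos hx
  have hlt : ‖x - c‖ < ρ := mem_ball_iff_norm.1 hx
  have hgrad' : ‖∇ (localization c ρ (m + 1) u) x‖ ≤
      ballWeight c ρ x ^ m * (ρ + ‖x - c‖) * u x := by
    refine le_of_mul_le_mul_right (hgrad.trans_eq ?_) (sub_pos.2 hlt)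
    rw [localization, pow_succ, ballWeight_eq_mul]
    ring
  have hsplit : ballWeight c ρ x ^ (m + 1) • ∇ u x = ∇ (localization c ρ (m + 1) u) x +
      (2 * (m + 1) * ballWeight c ρ x ^ m * u x) • (x - c) := by
    rw [gradient_localization hu, sub_add_cancel]
  refine le_of_mul_le_mul_left ?_ (pow_pos hη m)
  calc ballWeight c ρ x ^ m * (ballWeight c ρ x * ‖∇ u x‖)
      = ‖ballWeight c ρ x ^ (m + 1) • ∇ u x‖ := by
        rw [norm_smul, Real.norm_of_nonneg (by positivity)]
        ring
    _ ≤ ‖∇ (localization c ρ (m + 1) u) x‖ +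
          2 * (m + 1) * ballWeight c ρ x ^ m * u x * ‖x - c‖ := by
        rw [hsplit]
        refine (norm_add_le _ _).trans_eq ?_
        rw [norm_smul, Real.norm_of_nonneg (by positivity)]
    _ ≤ ballWeight c ρ x ^ m * (ρ + ρ) * u x + 2 * (m + 1) * ballWeight c ρ x ^ m * u x * ρ := by
        refine add_le_add (hgrad'.trans ?_) ?_ <;> gcongr
    _ = ballWeight c ρ x ^ m * (2 * (m + 2) * ρ * u x) := by ring

variable [FiniteDimensional ℝ E]

open LinearMap

lemma trace_comp_hessian_localization (A : E →L[ℝ] E) (hu : ContDiffAt ℝ 2 u x) :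
    trace ℝ E (A ∘L hessian (localization c ρ (m + 2) u) x) =
      ballWeight c ρ x ^ (m + 2) * trace ℝ E (A ∘L hessian u x) -
      2 * (m + 2) * ballWeight c ρ x ^ (m + 1) *
        (inner ℝ (x - c) (A (∇ u x)) + inner ℝ (∇ u x) (A (x - c))) -
      2 * (m + 2) * ballWeight c ρ x ^ (m + 1) * u x * trace ℝ E A +
      4 * (m + 2) * (m + 1) * ballWeight c ρ x ^ m * u x * inner ℝ (x - c) (A (x - c)) := by
  rw [hessian_localization hu]
  generalize x - c = y
  simp only [ContinuousLinearMap.comp_add, ContinuousLinearMap.comp_sub,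
    ContinuousLinearMap.comp_smul, ContinuousLinearMap.comp_id,
    ContinuousLinearMap.toLinearMap_add, ContinuousLinearMap.toLinearMap_sub,
    ContinuousLinearMap.toLinearMap_smul, map_add, map_sub, map_smul, smul_eq_mul,
    trace_comp_rankOne]

lemma neg_trace_comp_hessian_localization_le [Nontrivial E] {A : E →L[ℝ] E} (hlam : 0 ≤ lam)
    (hA : IsElliptic lam Lam A) (hx : x ∈ ball c ρ) (hu : ContDiffAt ℝ 2 u x) (hpos : 0 ≤ u x)
    (hsub : 0 ≤ trace ℝ E (A ∘L hessian u x))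
    (hgrad : ballWeight c ρ x * ‖∇ u x‖ ≤ 2 * (m + 3) * ρ * u x) :
    -trace ℝ E (A ∘L hessian (localization c ρ (m + 2) u) x) ≤
      2 * (m + 2) * (4 * (m + 3) + Module.finrank ℝ E) * Lam * ρ ^ 2 *
        (ballWeight c ρ x ^ m * u x) := by
  have hη : 0 < ballWeight c ρ x := ballWeight_pos hx
  have hρ : 0 < ρ := pos_of_mem_ball hx
  have hLam : 0 ≤ Lam := hA.nonneg
  have hlt : ‖x - c‖ < ρ := mem_ball_iff_norm.1 hx
  have hcross : ballWeight c ρ x *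
      (inner ℝ (x - c) (A (∇ u x)) + inner ℝ (∇ u x) (A (x - c))) ≤
      4 * (m + 3) * Lam * ρ ^ 2 * u x :=
    calc ballWeight c ρ x * (inner ℝ (x - c) (A (∇ u x)) + inner ℝ (∇ u x) (A (x - c)))
        ≤ ballWeight c ρ x * (Lam * ‖x - c‖ * ‖∇ u x‖ + Lam * ‖∇ u x‖ * ‖x - c‖) := by
          gcongr <;> exact hA.inner_apply_le _ _
      _ = 2 * Lam * ‖x - c‖ * (ballWeight c ρ x * ‖∇ u x‖) := by ring
      _ ≤ 2 * Lam * ρ * (2 * (m + 3) * ρ * u x) := by gcongr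
      _ = 4 * (m + 3) * Lam * ρ ^ 2 * u x := by ring
  have hdiag : ballWeight c ρ x * u x * trace ℝ E A ≤ ρ ^ 2 * u x * (Module.finrank ℝ E * Lam) :=
    calc ballWeight c ρ x * u x * trace ℝ E A
        ≤ ballWeight c ρ x * u x * (Module.finrank ℝ E * Lam) := by gcongr; exact hA.trace_le
      _ ≤ ρ ^ 2 * u x * (Module.finrank ℝ E * Lam) := by gcongr; exact ballWeight_le
  have hcoercive : 0 ≤ inner ℝ (x - c) (A (x - c)) := le_trans (by positivity) (hA.coercive _)
  have hsub' : 0 ≤ ballWeight c ρ x ^ (m + 2) * trace ℝ E (A ∘L hessian u x) := by positivity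
  have hquad : 0 ≤ 4 * (m + 2) * (m + 1) * ballWeight c ρ x ^ m * u x *
      inner ℝ (x - c) (A (x - c)) := by positivity
  have hscaled := mul_le_mul_of_nonneg_left (add_le_add hcross hdiag)
    (by positivity : 0 ≤ 2 * (m + 2) * ballWeight c ρ x ^ m)
  rw [trace_comp_hessian_localization A hu]
  ring_nf at hscaled hsub' hquad ⊢
  linarith

end ContactEstimate

section LocalMaximumPrinciple

open scoped Gradient

open LinearMap Module

lemma pow_mul_pow_le_rpow_mul_rpow {a t M : ℝ} {m : ℕ} (n : ℕ) (ha : 0 ≤ a) (ht : 0 ≤ t)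
    (hM : a ^ (m + 2) * t ≤ M) :
    (a ^ m * t) ^ n ≤ M ^ (n - 2 * n / (m + 2) : ℝ) * t ^ (2 * n / (m + 2) : ℝ) := by
  have hm : (m + 2 : ℝ) ≠ 0 := by positivity
  have hsplit : (n - 2 * n / (m + 2) : ℝ) = m * n / (m + 2) := by field_simp; ring
  have htn : t ^ n = t ^ (m * n / (m + 2) : ℝ) * t ^ (2 * n / (m + 2) : ℝ) := by
    rw [← Real.rpow_add_of_nonneg ht (by positivity) (by positivity), ← Real.rpow_natCast]
    congr 1
    field_simp
  have han : (a ^ m) ^ n = (a ^ (m + 2)) ^ (m * n / (m + 2) : ℝ) := by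
    rw [← pow_mul, ← Real.rpow_natCast, ← Real.rpow_natCast, ← Real.rpow_mul ha]
    congr 1
    push_cast
    field_simp
  calc (a ^ m * t) ^ n
      = (a ^ (m + 2) * t) ^ (m * n / (m + 2) : ℝ) * t ^ (2 * n / (m + 2) : ℝ) := by
        rw [mul_pow, han, htn, Real.mul_rpow (by positivity) ht, mul_assoc]
    _ ≤ M ^ (n - 2 * n / (m + 2) : ℝ) * t ^ (2 * n / (m + 2) : ℝ) := by
        rw [hsplit]
        gcongr

variable {E : Type*} [NormedAddCommGroup E] [InnerProductSpace ℝ E] [FiniteDimensional ℝ E]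
  {u : E → ℝ} {c x : E} {r ρ R lam Lam : ℝ} {m : ℕ}

/-- Classical subsolutions on `Ω` of the Pucci extremal equation `sup_A tr(A D²u) = 0`, the
supremum being over all (not necessarily symmetric) elliptic operators with the given constants.
Only a pointwise choice of coefficients is required, so no measurability is involved. -/
structure IsPucciSubsolutionOn (lam Lam : ℝ) (Ω : Set E) (u : E → ℝ) : Prop where
  contDiffOn : ContDiffOn ℝ 2 u Ω
  exists_trace_nonneg : ∀ x ∈ Ω, ∃ A, IsElliptic lam Lam A ∧ 0 ≤ trace ℝ E (A ∘L hessian u x)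

lemma IsPucciSubsolutionOn.mono {Ω Ω' : Set E} (hu : IsPucciSubsolutionOn lam Lam Ω u)
    (h : Ω' ⊆ Ω) : IsPucciSubsolutionOn lam Lam Ω' u :=
  ⟨hu.contDiffOn.mono h, fun x hx ↦ hu.exists_trace_nonneg x (h hx)⟩

/-- The constant in the bound for the Hessian of a localized subsolution on its contact set. -/
def contactConstant (n m : ℕ) (lam Lam ρ : ℝ) : ℝ :=
  2 * (m + 2) * (4 * (m + 3) + n) * Lam * ρ ^ 2 / lam

lemma contactConstant_nonneg (n m : ℕ) (ρ : ℝ) (hlam : 0 ≤ lam) (hLam : 0 ≤ Lam) :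
    0 ≤ contactConstant n m lam Lam ρ := by
  unfold contactConstant
  positivity

lemma IsPucciSubsolutionOn.abs_det_hessian_localization_le [Nontrivial E] (hlam : 0 < lam)
    (hu : IsPucciSubsolutionOn lam Lam (ball c ρ) u)
    (hx : x ∈ upperContactSet (localization c ρ (m + 2) u) c ρ) :
    |(hessian (localization c ρ (m + 2) u) x).det| ≤
      (contactConstant (finrank ℝ E) m lam Lam ρ * (ballWeight c ρ x ^ m * u x)) ^
        finrank ℝ E := by
  obtain ⟨A, hA, htrace⟩ := hu.exists_trace_nonneg x hx.1
  have hux : ContDiffAt ℝ 2 u x := hu.contDiffOn.contDiffAt (isOpen_ball.mem_nhds hx.1)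
  have hpos : 0 ≤ u x := (pos_of_localization_pos hx.1 hx.2.1).le
  have hgrad : ballWeight c ρ x * ‖∇ u x‖ ≤ 2 * (m + 3) * ρ * u x := by
    have := ballWeight_mul_norm_gradient_le hx.1 (hux.differentiableAt two_ne_zero) hpos
      (norm_gradient_mul_le (fun y hy ↦ (localization_eq_zero_of_mem_sphere (by simp) hy).ge) hx)
    push_cast at this
    linarith
  refine abs_det_le_of_trace_comp_le hlam hA.coercive
    (neg_hessian_isPositive_of_isLocalMax_sub_inner (contDiffAt_localization hux)
      (isLocalMax_sub_inner_gradient hx)) ?_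
  refine (neg_trace_comp_hessian_localization_le hlam.le hA hx.1 hux hpos htrace hgrad).trans_eq ?_
  rw [contactConstant]
  field_simp

variable [MeasurableSpace E] [BorelSpace E] (μ : Measure E) [μ.IsAddHaarMeasure]

lemma measure_ball_localization_le_lintegral {κ : ℝ} {x₀ : E} (hκ : 0 ≤ κ)
    (hcont : ContinuousOn u (closedBall c ρ)) (hu : ContDiffOn ℝ 2 u (ball c ρ))
    (hdet : ∀ x ∈ upperContactSet (localization c ρ (m + 2) u) c ρ,
      |(hessian (localization c ρ (m + 2) u) x).det| ≤
        (κ * (ballWeight c ρ x ^ m * u x)) ^ finrank ℝ E)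
    (hx₀ : x₀ ∈ ball c ρ)
    (hmax : IsMaxOn (localization c ρ (m + 2) u) (closedBall c ρ) x₀) :
    μ (ball 0 (localization c ρ (m + 2) u x₀ / (2 * ρ))) ≤
      ENNReal.ofReal (κ ^ finrank ℝ E * localization c ρ (m + 2) u x₀ ^
        (finrank ℝ E - 2 * finrank ℝ E / (m + 2) : ℝ)) *
      ∫⁻ y in ball c ρ, ENNReal.ofReal (max (u y) 0 ^ (2 * finrank ℝ E / (m + 2) : ℝ)) ∂μ := by
  set n := finrank ℝ E
  set v := localization c ρ (m + 2) u
  set q : ℝ := 2 * n / (m + 2)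
  have hdet' (x : E) (hx : x ∈ upperContactSet v c ρ) :
      |(hessian v x).det| ≤ κ ^ n * v x₀ ^ (n - q : ℝ) * max (u x) 0 ^ q := by
    have hux : 0 ≤ u x := (pos_of_localization_pos hx.1 hx.2.1).le
    refine (hdet x hx).trans ?_
    rw [mul_pow, mul_assoc, max_eq_left hux]
    gcongr
    exact pow_mul_pow_le_rpow_mul_rpow n (ballWeight_pos hx.1).le hux
      (hmax (ball_subset_closedBall hx.1))
  have hv : ContDiffOn ℝ 2 v (ball c ρ) := (contDiff_ballWeight.pow _).contDiffOn.mul hu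
  have hvcont : ContinuousOn v (closedBall c ρ) :=
    ((contDiff_ballWeight (n := 0)).continuous.pow _).continuousOn.mul hcont
  have hsphere (y : E) (hy : y ∈ sphere c ρ) : v y = 0 :=
    localization_eq_zero_of_mem_sphere (by simp) hy
  calc μ (ball 0 (v x₀ / (2 * ρ)))
      ≤ ∫⁻ x in upperContactSet v c ρ, ENNReal.ofReal |(hessian v x).det| ∂μ :=
        measure_ball_le_lintegral_abs_det_hessian μ hvcont hv (fun y hy ↦ (hsphere y hy).le) hx₀
    _ ≤ ∫⁻ x in upperContactSet v c ρ,
          ENNReal.ofReal (κ ^ n * v x₀ ^ (n - q : ℝ) * max (u x) 0 ^ q) ∂μ :=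
        setLIntegral_mono' (measurableSet_upperContactSet (hv.of_le one_le_two)) fun x hx ↦
          ENNReal.ofReal_le_ofReal (hdet' x hx)
    _ ≤ ∫⁻ x in ball c ρ, ENNReal.ofReal (κ ^ n * v x₀ ^ (n - q : ℝ) * max (u x) 0 ^ q) ∂μ :=
        lintegral_mono_set upperContactSet_subset_ball
    _ = _ := by
        simp only [ENNReal.ofReal_mul' (Real.rpow_nonneg (le_max_right _ _) q),
          lintegral_const_mul' _ _ ENNReal.ofReal_ne_top]

lemma ofReal_rpow_le_of_measure_ball_le {κ M q : ℝ} {I : ENNReal} (hρ : 0 < ρ) (hM : 0 < M)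
    (h : μ (ball (0 : E) (M / (2 * ρ))) ≤
      ENNReal.ofReal (κ ^ finrank ℝ E * M ^ (finrank ℝ E - q)) * I) :
    ENNReal.ofReal (M ^ q) ≤
      ENNReal.ofReal ((2 * ρ * κ) ^ finrank ℝ E) / μ (ball (0 : E) 1) * I := by
  set n := finrank ℝ E
  have hball : μ (ball (0 : E) 1) ≠ 0 := (measure_ball_pos μ _ one_pos).ne'
  have hscale : 0 < M ^ (n - q) / (2 * ρ) ^ n := by positivity
  have hleft : (M / (2 * ρ)) ^ n = M ^ (n - q) / (2 * ρ) ^ n * M ^ q := by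
    rw [div_mul_eq_mul_div, ← Real.rpow_add hM, sub_add_cancel, Real.rpow_natCast, div_pow]
  have hright : κ ^ n * M ^ (n - q) = M ^ (n - q) / (2 * ρ) ^ n * (2 * ρ * κ) ^ n := by
    rw [mul_pow _ κ]
    field_simp
  rw [Measure.addHaar_ball_of_pos μ _ (by positivity), hleft, hright,
    ENNReal.ofReal_mul hscale.le, ENNReal.ofReal_mul hscale.le, mul_assoc, mul_assoc,
    ENNReal.mul_le_mul_iff_right (by simpa using hscale) ENNReal.ofReal_ne_top] at h
  rwa [← ENNReal.mul_div_right_comm, ENNReal.le_div_iff_mul_le (.inl hball)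
    (.inl measure_ball_lt_top.ne)]

lemma IsPucciSubsolutionOn.ofReal_rpow_localization_le [Nontrivial E] (hlam : 0 < lam)
    (hu : IsPucciSubsolutionOn lam Lam (ball c ρ) u) (hcont : ContinuousOn u (closedBall c ρ))
    (hx : x ∈ ball c ρ) (hpos : 0 < localization c ρ (m + 2) u x) :
    ENNReal.ofReal (localization c ρ (m + 2) u x ^ (2 * finrank ℝ E / (m + 2) : ℝ)) ≤
      ENNReal.ofReal ((2 * ρ * contactConstant (finrank ℝ E) m lam Lam ρ) ^ finrank ℝ E) /
        μ (ball (0 : E) 1) *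
      ∫⁻ y in ball c ρ, ENNReal.ofReal (max (u y) 0 ^ (2 * finrank ℝ E / (m + 2) : ℝ)) ∂μ := by
  have hρ : 0 < ρ := pos_of_mem_ball hx
  have hLam : 0 ≤ Lam := (hu.exists_trace_nonneg x hx).choose_spec.1.nonneg
  obtain ⟨x₀, hx₀, hmax⟩ := (isCompact_closedBall c ρ).exists_isMaxOn
    ⟨x, ball_subset_closedBall hx⟩
    (((contDiff_ballWeight (n := 0)).continuous.pow (m + 2)).continuousOn.mul hcont)
  have hle : localization c ρ (m + 2) u x ≤ localization c ρ (m + 2) u x₀ :=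
    hmax (ball_subset_closedBall hx)
  have hx₀' : x₀ ∈ ball c ρ := mem_ball.2 <| lt_of_le_of_ne hx₀ fun h ↦
    (hpos.trans_le hle).ne' (localization_eq_zero_of_mem_sphere (by simp) h)
  calc ENNReal.ofReal (localization c ρ (m + 2) u x ^ (2 * finrank ℝ E / (m + 2) : ℝ))
      ≤ ENNReal.ofReal (localization c ρ (m + 2) u x₀ ^ (2 * finrank ℝ E / (m + 2) : ℝ)) := by
        gcongr
    _ ≤ _ := ofReal_rpow_le_of_measure_ball_le μ hρ (hpos.trans_le hle) <|
        measure_ball_localization_le_lintegral μ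
          (contactConstant_nonneg _ m ρ hlam.le hLam) hcont hu.contDiffOn
          (fun _ hy ↦ hu.abs_det_hessian_localization_le hlam hy) hx₀' hmax

lemma IsPucciSubsolutionOn.ofReal_le_lintegral_rpow [Nontrivial E] (hlam : 0 < lam) (hrρ : r < ρ)
    (hu : IsPucciSubsolutionOn lam Lam (ball c ρ) u) (hcont : ContinuousOn u (closedBall c ρ))
    (hx : x ∈ ball c r) :
    ENNReal.ofReal (max (u x) 0) ≤ ENNReal.ofReal ((ρ ^ 2 - r ^ 2) ^ (m + 2))⁻¹ *
      (ENNReal.ofReal ((2 * ρ * contactConstant (finrank ℝ E) m lam Lam ρ) ^ finrank ℝ E) /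
        μ (ball (0 : E) 1)) ^ (1 / (2 * finrank ℝ E / (m + 2)) : ℝ) *
      (∫⁻ y in ball c ρ, ENNReal.ofReal (max (u y) 0 ^ (2 * finrank ℝ E / (m + 2) : ℝ)) ∂μ) ^
        (1 / (2 * finrank ℝ E / (m + 2)) : ℝ) := by
  rcases le_or_gt (u x) 0 with hux | hux
  · simp [max_eq_right hux]
  have hxρ : x ∈ ball c ρ := ball_subset_ball hrρ.le hx
  have hn : 0 < finrank ℝ E := finrank_pos
  have hr : 0 < r := pos_of_mem_ball hx
  have hgap : 0 < ρ ^ 2 - r ^ 2 := sub_pos.2 (by gcongr)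
  have hv : 0 < localization c ρ (m + 2) u x := mul_pos (pow_pos (ballWeight_pos hxρ) _) hux
  have hweight : ρ ^ 2 - r ^ 2 ≤ ballWeight c ρ x := by
    rw [ballWeight]
    gcongr
    exact (mem_ball_iff_norm.1 hx).le
  have hloc : u x ≤ ((ρ ^ 2 - r ^ 2) ^ (m + 2))⁻¹ * localization c ρ (m + 2) u x := by
    rw [localization, inv_mul_eq_div, le_div_iff₀' (by positivity)]
    gcongr
  have hroot := ENNReal.rpow_le_rpow (hu.ofReal_rpow_localization_le μ (m := m) hlam hcont hxρ hv)
    (by positivity : (0 : ℝ) ≤ 1 / (2 * finrank ℝ E / (m + 2)))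
  rw [← ENNReal.ofReal_rpow_of_pos hv, ← ENNReal.rpow_mul, mul_one_div_cancel (by positivity),
    ENNReal.rpow_one, ENNReal.mul_rpow_of_nonneg _ _ (by positivity)] at hroot
  calc ENNReal.ofReal (max (u x) 0)
      ≤ ENNReal.ofReal ((ρ ^ 2 - r ^ 2) ^ (m + 2))⁻¹ *
          ENNReal.ofReal (localization c ρ (m + 2) u x) := by
        rw [max_eq_left hux.le, ← ENNReal.ofReal_mul (by positivity)]
        exact ENNReal.ofReal_le_ofReal hloc
    _ ≤ _ := by
        rw [mul_assoc]
        gcongr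

lemma exists_ofReal_le_mul_lintegral_rpow [Nontrivial E] (hlam : 0 < lam) (Lam : ℝ) (hrR : r < R)
    (m : ℕ) :
    ∃ K : ENNReal, K ≠ ⊤ ∧ ∀ (c : E) (u : E → ℝ), IsPucciSubsolutionOn lam Lam (ball c R) u →
      ∀ x ∈ ball c r, ENNReal.ofReal (max (u x) 0) ≤
        K * (∫⁻ y in ball c R, ENNReal.ofReal (max (u y) 0 ^ (2 * finrank ℝ E / (m + 2) : ℝ)) ∂μ) ^
          (1 / (2 * finrank ℝ E / (m + 2)) : ℝ) := by
  obtain ⟨ρ, hrρ, hρR⟩ := exists_between hrR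
  refine ⟨ENNReal.ofReal ((ρ ^ 2 - r ^ 2) ^ (m + 2))⁻¹ *
    (ENNReal.ofReal ((2 * ρ * contactConstant (finrank ℝ E) m lam Lam ρ) ^ finrank ℝ E) /
      μ (ball (0 : E) 1)) ^ (1 / (2 * finrank ℝ E / (m + 2)) : ℝ),
    ENNReal.mul_ne_top ENNReal.ofReal_ne_top (ENNReal.rpow_ne_top_of_nonneg (by positivity)
      (ENNReal.div_ne_top ENNReal.ofReal_ne_top (measure_ball_pos μ _ one_pos).ne')),
    fun c u hu x hx ↦ ?_⟩
  refine ((hu.mono (ball_subset_ball hρR.le)).ofReal_le_lintegral_rpow μ (m := m) hlam hrρ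
    (hu.contDiffOn.continuousOn.mono (closedBall_subset_ball hρR)) hx).trans ?_
  gcongr

lemma lintegral_rpow_le_lintegral_rpow_mul {α : Type*} {mα : MeasurableSpace α} {ν : Measure α}
    {g : α → ℝ} {p q : ℝ} (hg : AEStronglyMeasurable g ν) (hg0 : 0 ≤ g) (hq : 0 < q)
    (hqp : q ≤ p) :
    (∫⁻ y, ENNReal.ofReal (g y ^ q) ∂ν) ^ (1 / q) ≤
      (∫⁻ y, ENNReal.ofReal (g y ^ p) ∂ν) ^ (1 / p) * ν Set.univ ^ (1 / q - 1 / p) := by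
  have henorm {s : ℝ} (hs : 0 < s) (y : α) : ‖g y‖ₑ ^ s = ENNReal.ofReal (g y ^ s) := by
    rw [Real.enorm_of_nonneg (hg0 y), ENNReal.ofReal_rpow_of_nonneg (hg0 y) hs.le]
  simpa only [eLpNorm', henorm hq, henorm (hq.trans_le hqp)] using
    eLpNorm'_le_eLpNorm'_mul_rpow_measure_univ hq hqp hg

end LocalMaximumPrinciple

theorem local_max_principle_nondivergence_general {E : Type*} [NormedAddCommGroup E]
    [InnerProductSpace ℝ E] [FiniteDimensional ℝ E] [Nontrivial E] [MeasurableSpace E]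
    [BorelSpace E] (μ : Measure E) [μ.IsAddHaarMeasure] {lam : ℝ} (hlam : 0 < lam) (Lam : ℝ)
    {r R : ℝ} (hrR : r < R) {p : ℝ} (hp : 0 < p) :
    ∃ C : ℝ, 0 < C ∧ ∀ (c : E) (φ : E → ℝ), IsPucciSubsolutionOn lam Lam (ball c R) φ →
      ∀ x ∈ ball c r, ENNReal.ofReal (max (φ x) 0) ≤ ENNReal.ofReal C *
        (∫⁻ y in ball c R, ENNReal.ofReal (max (φ y) 0 ^ p) ∂μ) ^ (1 / p) := by
  have hn : 0 < Module.finrank ℝ E := Module.finrank_pos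
  obtain ⟨m, hm⟩ := exists_nat_ge (2 * Module.finrank ℝ E / p)
  set q : ℝ := 2 * Module.finrank ℝ E / (m + 2)
  have hq : 0 < q := by positivity
  have hqp : q ≤ p := by
    rw [div_le_iff₀ hp] at hm
    rw [div_le_iff₀ (by positivity)]
    linarith
  obtain ⟨K, hK, hbound⟩ := exists_ofReal_le_mul_lintegral_rpow μ hlam Lam hrR m
  have hC : K * μ (ball (0 : E) R) ^ (1 / q - 1 / p) ≠ ⊤ :=
    ENNReal.mul_ne_top hK (ENNReal.rpow_ne_top_of_nonneg
      (sub_nonneg.2 (one_div_le_one_div_of_le hq hqp)) measure_ball_lt_top.ne)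
  refine ⟨(K * μ (ball (0 : E) R) ^ (1 / q - 1 / p)).toReal + 1, by positivity,
    fun c φ hφ x hx ↦ ?_⟩
  have hholder := lintegral_rpow_le_lintegral_rpow_mul (ν := μ.restrict (ball c R))
    ((hφ.contDiffOn.continuousOn.sup continuousOn_const).aestronglyMeasurable measurableSet_ball)
    (fun y ↦ le_max_right (φ y) 0) hq hqp
  rw [Measure.restrict_apply_univ, Measure.addHaar_ball_center] at hholder
  calc ENNReal.ofReal (max (φ x) 0)
      ≤ K * ((∫⁻ y in ball c R, ENNReal.ofReal (max (φ y) 0 ^ p) ∂μ) ^ (1 / p) *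
          μ (ball (0 : E) R) ^ (1 / q - 1 / p)) :=
        (hbound c φ hφ x hx).trans (mul_le_mul_right hholder K)
    _ = K * μ (ball (0 : E) R) ^ (1 / q - 1 / p) *
          (∫⁻ y in ball c R, ENNReal.ofReal (max (φ y) 0 ^ p) ∂μ) ^ (1 / p) := by ring
    _ ≤ _ := mul_le_mul_left ((ENNReal.le_ofReal_iff_toReal_le hC (by positivity)).2
        (le_add_of_nonneg_right zero_le_one)) _

section Coordinates

open LinearMap

variable {n : ℕ} {lam Lam : ℝ} {Ω : Set (Eucl n)} {A : Eucl n → Matrix (Fin n) (Fin n) ℝ}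
  {u : Eucl n → ℝ} {x : Eucl n}

lemma UnifElliptic.isElliptic (hA : UnifElliptic lam Lam Ω A) (hx : x ∈ Ω) :
    IsElliptic lam Lam (Matrix.toEuclideanCLM (𝕜 := ℝ) (A x)) where
  coercive ξ := by
    refine ((hA x hx ξ).1).trans_eq ?_
    simp [PiLp.inner_apply, Matrix.mulVec, dotProduct, mul_comm]
  norm_apply_le ξ := by
    refine le_trans (le_of_eq ?_) (hA x hx ξ).2
    simp [EuclideanSpace.norm_eq, Matrix.mulVec, dotProduct]

lemma sum_mul_fderiv_fderiv_single_eq_trace (hu : ContDiffAt ℝ 2 u x)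
    (B : Matrix (Fin n) (Fin n) ℝ) :
    ∑ i, ∑ j, B i j * fderiv ℝ (fun y ↦ fderiv ℝ u y (EuclideanSpace.single i 1)) x
      (EuclideanSpace.single j 1) =
      trace ℝ (Eucl n) (Matrix.toEuclideanCLM (𝕜 := ℝ) B ∘L hessian u x) := by
  have hfderiv : DifferentiableAt ℝ (fderiv ℝ u) x :=
    (hu.fderiv_right (m := 1) (by norm_num)).differentiableAt one_ne_zero
  have hentry (i j : Fin n) :
      fderiv ℝ (fun y ↦ fderiv ℝ u y (EuclideanSpace.single i 1)) x (EuclideanSpace.single j 1) =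
        hessian u x (EuclideanSpace.single i 1) j := by
    rw [fderiv_clm_apply hfderiv (differentiableAt_const _)]
    simp [(hu.isSymmSndFDerivAt (by simp)).eq (EuclideanSpace.single j 1), ← inner_hessian_apply hu,
      EuclideanSpace.inner_single_right]
  rw [trace_eq_sum_inner _ (EuclideanSpace.basisFun (Fin n) ℝ)]
  simp [hentry, EuclideanSpace.inner_single_left, Matrix.mulVec, dotProduct]

lemma NondivSubsolution.isPucciSubsolutionOn (hA : UnifElliptic lam Lam Ω A)
    (hu : NondivSubsolution A Ω u) (hΩ : IsOpen Ω) : IsPucciSubsolutionOn lam Lam Ω u where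
  contDiffOn := hu.1
  exists_trace_nonneg x hx := ⟨_, hA.isElliptic hx, by
    rw [← sum_mul_fderiv_fderiv_single_eq_trace (hu.1.contDiffAt (hΩ.mem_nhds hx))]
    exact hu.2 x hx⟩

end Coordinates

/-- **Local maximum principle with `L^p` norms, non-divergence form (Theorem 1.3)**:
for every `p > 0` there is `C(p) > 0` depending only on `p, n, λ, Λ` such that for any
`C²` subsolution `φ` of `tr(A D²φ) ≥ 0` in `B_1`,
`sup_{B_{1/2}} φ⁺ ≤ C(p) (∫_{B_1} (φ⁺)^p)^{1/p}` (stated with the lower Lebesgue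
integral, so that the right-hand side is `+∞` when `(φ⁺)^p` is not integrable). -/
theorem local_max_principle_nondivergence (n : ℕ) (hn : 2 ≤ n) (lam Lam : ℝ)
    (hlam : 0 < lam) (hlL : lam ≤ Lam) (p : ℝ) (hp : 0 < p) :
    ∃ C : ℝ, 0 < C ∧
      ∀ A : Eucl n → Matrix (Fin n) (Fin n) ℝ,
        UnifElliptic lam Lam (ball (0 : Eucl n) 1) A →
        ∀ φ : Eucl n → ℝ, NondivSubsolution A (ball (0 : Eucl n) 1) φ →
          ∀ x ∈ ball (0 : Eucl n) (1 / 2),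
            ENNReal.ofReal (max (φ x) 0) ≤ ENNReal.ofReal C *
              (∫⁻ y in ball (0 : Eucl n) 1, ENNReal.ofReal (max (φ y) 0 ^ p) ∂volume)
                ^ (1 / p) := by
  have : Nontrivial (Fin n) := Fin.nontrivial_iff_two_le.2 hn
  obtain ⟨C, hC, hbound⟩ := local_max_principle_nondivergence_general
    (volume : Measure (Eucl n)) hlam Lam one_half_lt_one hp
  exact ⟨C, hC, fun A hA φ hφ ↦ hbound 0 φ (hφ.isPucciSubsolutionOn hA isOpen_ball)⟩

end
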